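/- Let G and Ω be domains in ℂ with G simply connected, and let Φ = (φₙ) be any sequence of holomorphic maps from G to Ω. Then there exists a (Φ,G,Ω)-universal function if and only if for every compact set K ⊆ G and every compact set L ⊆ Ω there exists n ∈ ℕ such that φₙ(K) ∩ L = ∅ and φₙ is injective on a neighbourhood of K. -/

import Mathlib

open Set Metric Bornology Filter

/-- A *hole* of `E` is a nonempty bounded connected component of `ℂ \ E`. -/
def IsHole (E C : Set ℂ) : Prop :=
  (∃ z ∈ Eᶜ, C = connectedComponentIn Eᶜ z) ∧ Bornology.IsBounded C

/-- A compact set `K` contained in an open set `Ω` is `Ω`-*convex* if every hole of `K`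
contains a point of `ℂ \ Ω`. -/
def OmegaConvex (Ω K : Set ℂ) : Prop :=
  ∀ C : Set ℂ, IsHole K C → (C ∩ Ωᶜ).Nonempty

/-- The *polynomial hull* of `K`: the union of `K` and all of its holes. -/
def polyHull (K : Set ℂ) : Set ℂ :=
  K ∪ {z | z ∈ Kᶜ ∧ Bornology.IsBounded (connectedComponentIn Kᶜ z)}

/-- A sequence of maps is *eventually injective* on `G`: for every compact `K ⊆ G`, the maps
are eventually injective on a neighbourhood of `K` in `G`. -/
def EventuallyInjective (G : Set ℂ) (φ : ℕ → ℂ → ℂ) : Prop :=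
  ∀ K : Set ℂ, K ⊆ G → IsCompact K →
    ∃ N : ℕ, ∀ n ≥ N, ∃ U : Set ℂ, IsOpen U ∧ K ⊆ U ∧ U ⊆ G ∧ Set.InjOn (φ n) U

/-- `f` is `(Φ, G, Ω)`-*universal*: the family `{f ∘ φ n : n ∈ ℕ}` is dense in `H(G)` for the
topology of locally uniform convergence, i.e. every `g` holomorphic on `G` can be approximated
uniformly on every compact subset of `G` by functions `f ∘ φ n`. -/
def UniversalFor (G : Set ℂ) (φ : ℕ → ℂ → ℂ) (f : ℂ → ℂ) : Prop :=
  ∀ g : ℂ → ℂ, DifferentiableOn ℂ g G →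
    ∀ K : Set ℂ, K ⊆ G → IsCompact K → ∀ ε : ℝ, 0 < ε →
      ∃ n : ℕ, ∀ z ∈ K, ‖f (φ n z) - g z‖ < ε

/-- `E` has no hole (for a domain: simple connectivity). -/
def HasNoHole (E : Set ℂ) : Prop := ¬ ∃ C : Set ℂ, IsHole E C

/-- A *Jordan curve*: the image of the unit circle under an injective continuous map. -/
def IsJordanCurve (C : Set ℂ) : Prop :=
  ∃ γ : ℂ → ℂ, ContinuousOn γ (Metric.sphere 0 1) ∧ Set.InjOn γ (Metric.sphere 0 1) ∧
    C = γ '' Metric.sphere 0 1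

/-- A *Jordan arc*: the image of `[0,1]` under an injective continuous map. -/
def IsJordanArc (C : Set ℂ) : Prop :=
  ∃ γ : ℝ → ℂ, ContinuousOn γ (Set.Icc 0 1) ∧ Set.InjOn γ (Set.Icc 0 1) ∧
    C = γ '' Set.Icc 0 1

/-- A compact set is *regular* if its boundary is a union of Jordan curves. -/
def RegularCompact (K : Set ℂ) : Prop :=
  ∃ 𝒞 : Set (Set ℂ), (∀ C ∈ 𝒞, IsJordanCurve C) ∧ frontier K = ⋃₀ 𝒞

/-- `K` is `Ω`-*connected*: it has no hole if `Ω` is simply connected, and has at least one hole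
if `Ω` is not simply connected. -/
def OmegaConnectedSet (Ω K : Set ℂ) : Prop :=
  (HasNoHole Ω → HasNoHole K) ∧ (¬ HasNoHole Ω → ∃ C : Set ℂ, IsHole K C)

/-- Membership in the family `M(Ω)` of nonempty compact subsets of `Ω` that are regular,
connected, `Ω`-connected and `Ω`-convex. -/
def MemM (Ω K : Set ℂ) : Prop :=
  K.Nonempty ∧ IsCompact K ∧ K ⊆ Ω ∧ RegularCompact K ∧ IsConnected K ∧
    OmegaConnectedSet Ω K ∧ OmegaConvex Ω K

/-- `f` is `(Φ, M)`-*universal*: for every `K ∈ M`, the restrictions of the `f ∘ φ n` to `K`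
are dense in `C(K)`. -/
def MUniversal (M : Set (Set ℂ)) (φ : ℕ → ℂ → ℂ) (f : ℂ → ℂ) : Prop :=
  ∀ K ∈ M, ∀ h : ℂ → ℂ, ContinuousOn h K → ∀ ε : ℝ, 0 < ε →
    ∃ n : ℕ, ∀ z ∈ K, ‖f (φ n z) - h z‖ < ε


/-!
Necessity: if `f ∘ φₙ` is uniformly close to `z ↦ z + c` near `K`, then it is injective there, and
for `c` large it exceeds `sup_L |f|` on `K`, so `φₙ` is injective near `K` and `φₙ(K)` misses `L`.

Sufficiency: by Birkhoff's transitivity criterion in the Polish space `H(Ω)` it is enough to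
approximate `f` on `L` and `g ∘ φₙ⁻¹` on `φₙ(K)` by one function of `H(Ω)`. After enlarging the two
compact sets, `L` is `Ω`-convex and `K` has no hole, and Runge's theorem applies as soon as
`L ∪ φₙ(K)` is `Ω`-convex. Suppose some hole `C` of the union lies in `Ω`, and let `a ∈ C`. Then
`w ↦ w - a` has no continuous logarithm on `∂C`. But on `closure C ∩ L` it is, up to a nonvanishing
function continuous on all of `closure C`, an exponential, by `Ω`-convexity of `L`; and on `φₙ(K)`
every nonvanishing holomorphic function has a continuous logarithm, because `K` has no hole and its
pullback to `K` is approximable by polynomials. As `L` and `φₙ(K)` are disjoint, these logarithms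
glue.

For Runge's theorem, the Cauchy–Pompeiu formula puts a function holomorphic near `X` into the
closed algebra generated by the functions `(w - a)⁻¹`, `a ∉ X`; the pole `a` is pushed to any other
point of its hole because passing from `C(X)` to a closed subalgebra enlarges the spectrum of the
coordinate only by whole holes of `X`.
-/

section CauchyPompeiu

open MeasureTheory

/-- The Wirtinger derivative `∂u/∂ζ̄`. -/
noncomputable def dbar (u : ℂ → ℂ) (ζ : ℂ) : ℂ :=
  (fderiv ℝ u ζ 1 + Complex.I * fderiv ℝ u ζ Complex.I) / 2

theorem dbar_congr {u v : ℂ → ℂ} {ζ : ℂ} (h : u =ᶠ[nhds ζ] v) : dbar u ζ = dbar v ζ := by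
  rw [dbar, dbar, h.fderiv_eq]

theorem dbar_eq_zero_of_differentiableAt {u : ℂ → ℂ} {ζ : ℂ} (hu : DifferentiableAt ℂ u ζ) :
    dbar u ζ = 0 := by
  have hI : fderiv ℂ u ζ Complex.I = Complex.I * fderiv ℂ u ζ 1 := by
    simp
  rw [dbar, hu.fderiv_restrictScalars ℝ, ContinuousLinearMap.coe_restrictScalars', hI,
    ← mul_assoc, Complex.I_mul_I]
  ring

theorem continuous_dbar {u : ℂ → ℂ} (hu : ContDiff ℝ 1 u) : Continuous (dbar u) := by
  have := hu.continuous_fderiv one_ne_zero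
  unfold dbar
  fun_prop

variable {u : ℂ → ℂ}

theorem circleMap_zero_eq_mul (r θ : ℝ) : circleMap 0 r θ = r * circleMap 0 1 θ := by
  simp [circleMap]

theorem continuous_circleMap_zero_uncurry : Continuous fun p : ℝ × ℝ ↦ circleMap 0 p.1 p.2 := by
  unfold circleMap
  fun_prop

theorem polarCoord_symm_eq_circleMap (p : ℝ × ℝ) :
    Complex.polarCoord.symm p = circleMap 0 p.1 p.2 := by
  simp [circleMap, Complex.exp_mul_I]

theorem fderiv_add_I_mul_fderiv_mul_I (ζ e : ℂ) :
    fderiv ℝ u ζ e + Complex.I * fderiv ℝ u ζ (e * Complex.I) = 2 * star e * dbar u ζ := by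
  set D := fderiv ℝ u ζ
  have hD (a b : ℝ) : D (a + b * Complex.I) = a * D 1 + b * D Complex.I := by
    rw [← mul_one (a : ℂ), ← Complex.real_smul, ← Complex.real_smul, map_add, map_smul, map_smul]
    simp only [Complex.real_smul, mul_one]
  obtain ⟨a, b, rfl⟩ : ∃ a b : ℝ, e = a + b * Complex.I := ⟨e.re, e.im, e.re_add_im.symm⟩
  have he : (a + b * Complex.I) * Complex.I = (-b : ℝ) + a * Complex.I := by
    push_cast
    linear_combination b * Complex.I_sq
  rw [he, hD, hD, dbar]
  simp only [star_add, star_mul', Complex.star_def, Complex.conj_I, Complex.conj_ofReal]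
  push_cast
  linear_combination b * D Complex.I * Complex.I_sq

theorem smul_dbar_div_circleMap {r : ℝ} (hr : r ≠ 0) (θ : ℝ) :
    r • (dbar u (circleMap 0 r θ) / circleMap 0 r θ) =
      (1 / 2 : ℂ) * (fderiv ℝ u (circleMap 0 r θ) (circleMap 0 1 θ) +
        Complex.I * fderiv ℝ u (circleMap 0 r θ) (circleMap 0 1 θ * Complex.I)) := by
  have hstar : star (circleMap 0 1 θ) * circleMap 0 1 θ = 1 := by
    rw [Complex.star_def, Complex.conj_mul', norm_circleMap_zero, abs_one, Complex.ofReal_one,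
      one_pow]
  rw [fderiv_add_I_mul_fderiv_mul_I, Complex.real_smul, mul_div_assoc',
    div_eq_iff (circleMap_ne_center hr), circleMap_zero_eq_mul r]
  linear_combination -r * dbar u (r * circleMap 0 1 θ) * hstar

theorem integrableOn_fderiv_circleMap (hu : ContDiff ℝ 1 u) (hc : HasCompactSupport u)
    {v : ℝ → ℂ} (hv : Continuous v) :
    IntegrableOn (fun p : ℝ × ℝ ↦ fderiv ℝ u (circleMap 0 p.1 p.2) (v p.2))
      (Ioi 0 ×ˢ Ioo (-Real.pi) Real.pi) := by
  have hDc := hu.continuous_fderiv one_ne_zero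
  have hcont : Continuous fun p : ℝ × ℝ ↦ fderiv ℝ u (circleMap 0 p.1 p.2) (v p.2) :=
    (hDc.comp continuous_circleMap_zero_uncurry).clm_apply (hv.comp continuous_snd)
  obtain ⟨R, hR⟩ := (hc.fderiv (𝕜 := ℝ)).isCompact.isBounded.subset_closedBall 0
  refine IntegrableOn.of_forall_sdiff_eq_zero (hcont.continuousOn.integrableOn_compact
    ((isCompact_Icc (a := 0) (b := R)).prod (isCompact_Icc (a := -Real.pi) (b := Real.pi))))
    (measurableSet_Ioi.prod measurableSet_Ioo) ?_
  rintro ⟨r, θ⟩ ⟨⟨hr : 0 < r, hθ⟩, hout⟩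
  have hRr : R < r := by
    by_contra! h
    exact hout ⟨⟨hr.le, h⟩, Ioo_subset_Icc_self hθ⟩
  have hzero : circleMap 0 r θ ∉ tsupport (fderiv ℝ u) := fun h ↦ by
    have := hR h
    simp [abs_of_pos hr, hRr.not_ge] at this
  simp [image_eq_zero_of_notMem_tsupport hzero]

theorem integral_fderiv_circleMap_radial (hu : ContDiff ℝ 1 u) (hc : HasCompactSupport u)
    (θ : ℝ) : ∫ r in Ioi (0 : ℝ), fderiv ℝ u (circleMap 0 r θ) (circleMap 0 1 θ) = -u 0 := by
  have hray : Topology.IsClosedEmbedding fun r : ℝ ↦ circleMap 0 r θ := by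
    have he : circleMap 0 1 θ ≠ 0 := circleMap_ne_center one_ne_zero
    simpa [circleMap] using isClosedEmbedding_smul_left (𝕜 := ℝ) he
  have hray' (r : ℝ) : HasDerivAt (fun r : ℝ ↦ circleMap 0 r θ) (circleMap 0 1 θ) r := by
    simpa [circleMap] using (Complex.ofRealCLM.hasDerivAt (x := r)).mul_const (circleMap 0 1 θ)
  have hderiv (r : ℝ) : deriv (fun r : ℝ ↦ u (circleMap 0 r θ)) r =
      fderiv ℝ u (circleMap 0 r θ) (circleMap 0 1 θ) :=
    ((hu.differentiable one_ne_zero _).hasFDerivAt.comp_hasDerivAt r (hray' r)).deriv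
  have hsmooth : ContDiff ℝ 1 fun r : ℝ ↦ u (circleMap 0 r θ) := by
    refine hu.comp ?_
    unfold circleMap
    exact contDiff_const.add (Complex.ofRealCLM.contDiff.mul contDiff_const)
  simpa only [hderiv, circleMap_zero_radius, Function.const_apply] using
    HasCompactSupport.integral_Ioi_deriv_eq hsmooth (hc.comp_isClosedEmbedding hray) 0

theorem integral_fderiv_circleMap_angular (hu : ContDiff ℝ 1 u) {r : ℝ} (hr : r ≠ 0) :
    ∫ θ in Ioo (-Real.pi) Real.pi,
      fderiv ℝ u (circleMap 0 r θ) (circleMap 0 1 θ * Complex.I) = 0 := by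
  have hderiv (θ : ℝ) : HasDerivAt (fun θ ↦ u (circleMap 0 r θ))
      (r * fderiv ℝ u (circleMap 0 r θ) (circleMap 0 1 θ * Complex.I)) θ := by
    convert! (hu.differentiable one_ne_zero _).hasFDerivAt.comp_hasDerivAt θ
      (hasDerivAt_circleMap 0 r θ) using 1
    rw [circleMap_zero_eq_mul r, mul_assoc, ← Complex.real_smul (x := r) (z := _ * Complex.I),
      map_smul, Complex.real_smul]
  have hcont : Continuous fun θ : ℝ ↦
      (r : ℂ) * fderiv ℝ u (circleMap 0 r θ) (circleMap 0 1 θ * Complex.I) := by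
    have := hu.continuous_fderiv one_ne_zero
    unfold circleMap
    fun_prop
  have hint := intervalIntegral.integral_eq_sub_of_hasDerivAt (fun θ _ ↦ hderiv θ)
    (hcont.intervalIntegrable (-Real.pi) Real.pi)
  have hend : circleMap 0 r Real.pi = circleMap 0 r (-Real.pi) := by
    simpa [neg_add_eq_sub, two_mul] using (periodic_circleMap 0 r (-Real.pi))
  rw [intervalIntegral.integral_const_mul, hend, sub_self,
    intervalIntegral.integral_of_le (by linarith [Real.pi_pos]), integral_Ioc_eq_integral_Ioo,
    mul_eq_zero] at hint
  exact hint.resolve_left (mod_cast hr)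

theorem integral_dbar_div (hu : ContDiff ℝ 1 u) (hc : HasCompactSupport u) :
    ∫ ζ, dbar u ζ / ζ = -Real.pi * u 0 := by
  have hrad := integrableOn_fderiv_circleMap hu hc (continuous_circleMap 0 1)
  have hang := integrableOn_fderiv_circleMap hu hc
    ((continuous_circleMap 0 1).mul_const Complex.I)
  have hrad_eq : ∫ p in Ioi (0 : ℝ) ×ˢ Ioo (-Real.pi) Real.pi,
      fderiv ℝ u (circleMap 0 p.1 p.2) (circleMap 0 1 p.2) = -(2 * Real.pi) * u 0 := by
    rw [Measure.volume_eq_prod, ← Measure.prod_restrict,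
      integral_prod_symm _ (by rwa [Measure.prod_restrict])]
    simp only [integral_fderiv_circleMap_radial hu hc, setIntegral_const, measureReal_def,
      Real.volume_Ioo, sub_neg_eq_add, ← two_mul, ENNReal.toReal_ofReal Real.two_pi_pos.le,
      Complex.real_smul]
    push_cast
    ring
  have hang_eq : ∫ p in Ioi (0 : ℝ) ×ˢ Ioo (-Real.pi) Real.pi,
      fderiv ℝ u (circleMap 0 p.1 p.2) (circleMap 0 1 p.2 * Complex.I) = 0 := by
    rw [Measure.volume_eq_prod, setIntegral_prod _ hang,
      setIntegral_congr_fun measurableSet_Ioi fun r (hr : 0 < r) ↦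
        integral_fderiv_circleMap_angular hu hr.ne', integral_zero]
  rw [← Complex.integral_comp_polarCoord_symm, polarCoord_target]
  simp only [polarCoord_symm_eq_circleMap]
  rw [setIntegral_congr_fun (measurableSet_Ioi.prod measurableSet_Ioo)
      fun p hp ↦ smul_dbar_div_circleMap (ne_of_gt hp.1) p.2,
    integral_const_mul, integral_add hrad (hang.const_mul _), integral_const_mul, hrad_eq, hang_eq]
  ring

theorem integral_dbar_div_sub (hu : ContDiff ℝ 1 u) (hc : HasCompactSupport u) (z : ℂ) :
    ∫ ζ, dbar u ζ / (ζ - z) = -Real.pi * u z := by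
  have h := integral_dbar_div (hu.comp (contDiff_id.add contDiff_const))
    (hc.comp_homeomorph (Homeomorph.addRight z))
  rw [← integral_sub_right_eq_self _ z] at h
  simpa [dbar, Function.comp_def, fderiv_comp_add_right] using h

end CauchyPompeiu
section Runge

open MeasureTheory
open scoped Manifold ContDiff Topology

theorem exists_mem_eq_integral {X Y : Type*} [TopologicalSpace X] [CompactSpace X]
    [TopologicalSpace Y] [CompactSpace Y] [MeasurableSpace Y] [BorelSpace Y]
    (ν : Measure Y) [IsFiniteMeasureOnCompacts ν] {V : Submodule ℂ C(X, ℂ)}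
    (hV : IsClosed (V : Set C(X, ℂ))) (k : C(Y × X, ℂ)) (hk : ∀ y, k.curry y ∈ V) :
    ∃ F ∈ V, ∀ x, F x = ∫ y, k (y, x) ∂ν := by
  have : CompleteSpace V := hV.completeSpace_coe
  let κ : Y → V := fun y ↦ ⟨k.curry y, hk y⟩
  have hκ : Integrable κ ν := (k.curry.continuous.subtype_mk hk).integrable_of_hasCompactSupport
    (HasCompactSupport.of_compactSpace κ)
  exact ⟨_, (∫ y, κ y ∂ν).2, fun x ↦
    (((ContinuousMap.evalCLM ℂ x).comp V.subtypeL).integral_comp_comm hκ).symm⟩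

variable {X : Set ℂ}

theorem exists_cutoff (hX : IsCompact X) {U : Set ℂ} (hU : IsOpen U) (hXU : X ⊆ U) {f : ℂ → ℂ}
    (hf : DifferentiableOn ℂ f U) :
    ∃ u : ℂ → ℂ, ContDiff ℝ 1 u ∧ HasCompactSupport u ∧ ∀ᶠ z in 𝓝ˢ X, u z = f z := by
  obtain ⟨K, hK, hXK, hKU⟩ := exists_compact_between hX hU hXU
  obtain ⟨χ, hχX, hχK, -⟩ := exists_contMDiffMap_one_nhds_of_subset_interior 𝓘(ℝ, ℂ) (n := 1)
    hX.isClosed hXK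
  have hsupp : tsupport (fun z ↦ χ z • f z) ⊆ K := closure_minimal
    (fun z hz ↦ by_contra fun hzK ↦ hz (by simp [hχK z hzK])) hK.isClosed
  refine ⟨fun z ↦ χ z • f z, (contMDiff_of_tsupport fun z hz ↦ ContDiffAt.contMDiffAt ?_).contDiff,
    hK.of_isClosed_subset (isClosed_tsupport _) hsupp, ?_⟩
  · exact χ.contMDiff.contDiff.contDiffAt.smul
      ((hf.analyticAt (hU.mem_nhds (hKU (hsupp hz)))).contDiffAt.restrict_scalars ℝ)
  · filter_upwards [hχX] with z hz
    rw [hz, one_smul]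

theorem exists_contDiff_eqOn_dbar_eq_zero (hX : IsCompact X) {U : Set ℂ} (hU : IsOpen U)
    (hXU : X ⊆ U) {f : ℂ → ℂ} (hf : DifferentiableOn ℂ f U) :
    ∃ u : ℂ → ℂ, ContDiff ℝ 1 u ∧ HasCompactSupport u ∧ EqOn u f X ∧
      ∃ S, IsCompact S ∧ Disjoint S X ∧ ∀ ζ ∉ S, dbar u ζ = 0 := by
  obtain ⟨u, hu, huc, huf⟩ := exists_cutoff hX hU hXU hf
  obtain ⟨W, hW, hXW, hWu⟩ := eventually_nhdsSet_iff_exists.mp (huf.and (hU.mem_nhdsSet.mpr hXU))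
  refine ⟨u, hu, huc, fun z hz ↦ (hWu z (hXW hz)).1, tsupport u \ W, huc.isCompact.diff hW,
    disjoint_sdiff_left.mono_right hXW, fun ζ hζ ↦ ?_⟩
  by_cases hζW : ζ ∈ W
  · rw [dbar_congr (eventually_of_mem (hW.mem_nhds hζW) fun z hz ↦ (hWu z hz).1)]
    exact dbar_eq_zero_of_differentiableAt (hf.differentiableAt (hU.mem_nhds (hWu ζ hζW).2))
  · have hzero : u =ᶠ[𝓝 ζ] 0 := notMem_tsupport_iff_eventuallyEq.mp fun h ↦ hζ ⟨h, hζW⟩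
    rw [dbar_congr hzero]
    exact dbar_eq_zero_of_differentiableAt (differentiableAt_const 0)

theorem exists_mem_eq_of_inv_sub_mem [CompactSpace X] {V : Submodule ℂ C(X, ℂ)}
    (hV : IsClosed (V : Set C(X, ℂ))) (hpole : ∀ a ∉ X, ∃ F ∈ V, ∀ w : X, F w = (w - a : ℂ)⁻¹)
    {U : Set ℂ} (hU : IsOpen U) (hXU : X ⊆ U) {f : ℂ → ℂ} (hf : DifferentiableOn ℂ f U) :
    ∃ F ∈ V, ∀ w : X, F w = f w := by
  have hX : IsCompact X := isCompact_iff_compactSpace.mpr ‹_›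
  obtain ⟨u, hu, huc, huf, S, hS, hSdisj, hdbar⟩ := exists_contDiff_eqOn_dbar_eq_zero hX hU hXU hf
  have : CompactSpace S := isCompact_iff_compactSpace.mp hS
  have hSX (s : S) : (s : ℂ) ∉ X := disjoint_left.mp hSdisj s.2
  let k : C(S × X, ℂ) := ⟨fun p ↦ dbar u p.1 / (p.1 - p.2), by
    refine ((continuous_dbar hu).comp (by fun_prop)).div (by fun_prop) fun p ↦ ?_
    exact sub_ne_zero.mpr fun h ↦ hSX p.1 (h ▸ p.2.2)⟩
  have hk (s : S) : k.curry s ∈ V := by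
    obtain ⟨F, hF, hFeq⟩ := hpole s (hSX s)
    convert! V.smul_mem (-dbar u s) hF using 1
    ext w
    rw [ContinuousMap.smul_apply, hFeq, ← neg_sub, inv_neg]
    simp [k, div_eq_mul_inv]
  have := IsFiniteMeasureOnCompacts.comap' (volume : Measure ℂ) continuous_subtype_val
    (MeasurableEmbedding.subtype_coe hS.measurableSet)
  obtain ⟨F, hF, hFeq⟩ := exists_mem_eq_integral ((volume : Measure ℂ).comap Subtype.val) hV k hk
  refine ⟨(-Real.pi : ℂ)⁻¹ • F, V.smul_mem _ hF, fun w ↦ ?_⟩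
  have hpompeiu : F w = -Real.pi * u w := by
    rw [hFeq, ← integral_dbar_div_sub hu huc w]
    calc ∫ s : S, k (s, w) ∂_ = ∫ ζ in S, dbar u ζ / (ζ - w) :=
          integral_subtype_comap hS.measurableSet fun ζ ↦ dbar u ζ / (ζ - w)
      _ = ∫ ζ, dbar u ζ / (ζ - w) := setIntegral_eq_integral_of_forall_compl_eq_zero
          fun ζ hζ ↦ by rw [hdbar ζ hζ, zero_div]
  have hpi : (-Real.pi : ℂ) ≠ 0 := neg_ne_zero.mpr (mod_cast Real.pi_ne_zero)
  rw [ContinuousMap.smul_apply, hpompeiu, smul_eq_mul, inv_mul_cancel_left₀ hpi, huf w.2]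

/-- The inclusion of `X` into `ℂ`, as an element of the algebra `C(X, ℂ)`. -/
def coordinate (X : Set ℂ) : C(X, ℂ) := ⟨Subtype.val, continuous_subtype_val⟩

theorem spectrum_coordinate : spectrum ℂ (coordinate X) = X := by
  rw [ContinuousMap.spectrum_eq_range]
  exact Subtype.range_coe

section Algebra

variable [CompactSpace X] {A : Subalgebra ℂ C(X, ℂ)}

theorem exists_inv_sub_mem_iff (hid : coordinate X ∈ A) {a : ℂ} :
    (∃ F ∈ A, ∀ w : X, F w * (w - a) = 1) ↔
      a ∉ spectrum ℂ (⟨coordinate X, hid⟩ : A) := by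
  rw [spectrum.notMem_iff, ← IsUnit.neg_iff, neg_sub, isUnit_iff_exists_inv']
  simp only [Subtype.exists, Subtype.ext_iff, Subalgebra.coe_mul, Subalgebra.coe_sub,
    Subalgebra.coe_algebraMap, exists_prop, ContinuousMap.ext_iff]
  rfl

/-- The spectrum of the coordinate in a closed subalgebra is obtained from its spectrum `X` in
`C(X, ℂ)` by filling whole holes, so it suffices to invert it at one point of each hole. -/
theorem exists_inv_sub_mem (hA : IsClosed (A : Set C(X, ℂ))) (hid : coordinate X ∈ A)
    (hhole : ∀ C, IsHole X C → ∃ p ∈ C, ∃ F ∈ A, ∀ w : X, F w * (w - p) = 1) {a : ℂ}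
    (ha : a ∉ X) : ∃ F ∈ A, ∀ w : X, F w = (w - a : ℂ)⁻¹ := by
  suffices ∃ F ∈ A, ∀ w : X, F w * (w - a) = 1 from
    this.imp fun F hF ↦ hF.imp_right fun h w ↦ eq_inv_of_mul_eq_one_left (h w)
  rw [exists_inv_sub_mem_iff hid]
  intro ha'
  set x : A := ⟨coordinate X, hid⟩
  have hσ : spectrum ℂ (x : C(X, ℂ)) = X := spectrum_coordinate
  have hbounded := Subalgebra.spectrum_isBounded_connectedComponentIn A x ha'
  rw [hσ] at hbounded
  obtain ⟨p, hp, hinv⟩ := hhole _ ⟨⟨a, ha, rfl⟩, hbounded⟩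
  refine (exists_inv_sub_mem_iff hid).mp hinv ?_
  rw [Subalgebra.spectrum_sUnion_connectedComponentIn A x, hσ]
  exact Or.inr (mem_biUnion ⟨ha', ha⟩ hp)

theorem exists_mem_subalgebra_near (hid : coordinate X ∈ A)
    (hhole : ∀ C, IsHole X C → ∃ p ∈ C, ∃ F ∈ A, ∀ w : X, F w * (w - p) = 1)
    {U : Set ℂ} (hU : IsOpen U) (hXU : X ⊆ U) {f : ℂ → ℂ} (hf : DifferentiableOn ℂ f U)
    {ε : ℝ} (hε : 0 < ε) : ∃ F ∈ A, ∀ w : X, ‖F w - f w‖ < ε := by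
  have hle := A.le_topologicalClosure
  obtain ⟨F, hF, hFf⟩ := exists_mem_eq_of_inv_sub_mem (V := A.topologicalClosure.toSubmodule)
    A.isClosed_topologicalClosure
    (fun a ha ↦ exists_inv_sub_mem A.isClosed_topologicalClosure (hle hid) (fun C hC ↦
      (hhole C hC).imp fun p hp ↦ hp.imp_right fun ⟨F, hF, h⟩ ↦ ⟨F, hle hF, h⟩) ha) hU hXU hf
  obtain ⟨F', hF', hdist⟩ := Metric.mem_closure_iff.mp hF ε hε
  refine ⟨F', hF', fun w ↦ ?_⟩
  rw [← hFf, ← dist_eq_norm, dist_comm]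
  exact (ContinuousMap.dist_apply_le_dist w).trans_lt hdist

end Algebra

/-- The restrictions to `X` of the functions holomorphic on `Ω`, as a subalgebra of `C(X, ℂ)`. -/
def holomorphicRestrictions (Ω X : Set ℂ) : Subalgebra ℂ C(X, ℂ) where
  carrier := {F | ∃ f, DifferentiableOn ℂ f Ω ∧ ∀ x : X, F x = f x}
  mul_mem' := fun ⟨f, hf, hF⟩ ⟨g, hg, hG⟩ ↦ ⟨f * g, hf.mul hg, fun x ↦ by simp [hF, hG]⟩
  add_mem' := fun ⟨f, hf, hF⟩ ⟨g, hg, hG⟩ ↦ ⟨f + g, hf.add hg, fun x ↦ by simp [hF, hG]⟩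
  algebraMap_mem' c := ⟨fun _ ↦ c, differentiableOn_const c, fun _ ↦ rfl⟩

theorem runge {Ω : Set ℂ} (hX : IsCompact X) (hconv : OmegaConvex Ω X) {U : Set ℂ} (hU : IsOpen U)
    (hXU : X ⊆ U) {f : ℂ → ℂ} (hf : DifferentiableOn ℂ f U) {ε : ℝ} (hε : 0 < ε) :
    ∃ g, DifferentiableOn ℂ g Ω ∧ ∀ x ∈ X, ‖g x - f x‖ < ε := by
  have : CompactSpace X := isCompact_iff_compactSpace.mp hX
  have hpole (C : Set ℂ) (hC : IsHole X C) :
      ∃ p ∈ C, ∃ F ∈ holomorphicRestrictions Ω X, ∀ w : X, F w * (w - p) = 1 := by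
    obtain ⟨p, hpC, hpΩ⟩ := hconv C hC
    obtain ⟨⟨z, -, rfl⟩, -⟩ := hC
    have hpX (w : X) : (w : ℂ) - p ≠ 0 :=
      sub_ne_zero.mpr fun h ↦ connectedComponentIn_subset _ _ hpC (h ▸ w.2)
    exact ⟨p, hpC, ⟨fun w ↦ (w - p : ℂ)⁻¹, by fun_prop (disch := exact hpX _)⟩,
      ⟨fun w ↦ (w - p)⁻¹, (differentiableOn_id.sub_const p).inv fun w hw ↦
        sub_ne_zero.mpr (ne_of_mem_of_not_mem hw hpΩ), fun _ ↦ rfl⟩,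
      fun w ↦ inv_mul_cancel₀ (hpX w)⟩
  obtain ⟨F, ⟨g, hg, hFg⟩, hFf⟩ := exists_mem_subalgebra_near (A := holomorphicRestrictions Ω X)
    ⟨id, differentiableOn_id, fun _ ↦ rfl⟩ hpole hU hXU hf hε
  exact ⟨g, hg, fun x hx ↦ hFg ⟨x, hx⟩ ▸ hFf ⟨x, hx⟩⟩

theorem exists_polynomial_near (hX : IsCompact X) (hhole : HasNoHole X) {U : Set ℂ}
    (hU : IsOpen U) (hXU : X ⊆ U) {f : ℂ → ℂ} (hf : DifferentiableOn ℂ f U) {ε : ℝ} (hε : 0 < ε) :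
    ∃ p : Polynomial ℂ, ∀ x ∈ X, ‖p.eval x - f x‖ < ε := by
  have : CompactSpace X := isCompact_iff_compactSpace.mp hX
  obtain ⟨F, ⟨p, -, rfl⟩, hp⟩ := exists_mem_subalgebra_near (A := polynomialFunctions X)
    ⟨Polynomial.X, trivial, by ext; simp [coordinate]⟩ (fun C hC ↦ (hhole ⟨C, hC⟩).elim)
    hU hXU hf hε
  exact ⟨p, fun x hx ↦ by simpa using hp ⟨x, hx⟩⟩

end Runge
section ContinuousLogarithm

open scoped Topology

/-- `h` has a continuous logarithm on `X`. By Eilenberg's criterion such logarithms detect which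
points of `ℂ` lie in the same component of the complement of a compact plane set. -/
def HasContinuousLogOn {α : Type*} [TopologicalSpace α] (h : α → ℂ) (X : Set α) : Prop :=
  ∃ ℓ : α → ℂ, ContinuousOn ℓ X ∧ ∀ x ∈ X, Complex.exp (ℓ x) = h x

namespace HasContinuousLogOn

variable {α : Type*} [TopologicalSpace α] {h k : α → ℂ} {X Y : Set α}

theorem congr (hh : HasContinuousLogOn h X) (hk : EqOn k h X) : HasContinuousLogOn k X :=
  let ⟨ℓ, hℓ, hexp⟩ := hh
  ⟨ℓ, hℓ, fun x hx ↦ (hexp x hx).trans (hk hx).symm⟩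

theorem const {c : ℂ} (hc : c ≠ 0) : HasContinuousLogOn (fun _ ↦ c) X :=
  ⟨fun _ ↦ Complex.log c, continuousOn_const, fun _ _ ↦ Complex.exp_log hc⟩

theorem mul (hh : HasContinuousLogOn h X) (hk : HasContinuousLogOn k X) :
    HasContinuousLogOn (fun x ↦ h x * k x) X :=
  let ⟨ℓ, hℓ, hexp⟩ := hh
  let ⟨m, hm, hexp'⟩ := hk
  ⟨fun x ↦ ℓ x + m x, hℓ.add hm, fun x hx ↦ by rw [Complex.exp_add, hexp x hx, hexp' x hx]⟩

theorem inv (hh : HasContinuousLogOn h X) : HasContinuousLogOn (fun x ↦ (h x)⁻¹) X :=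
  let ⟨ℓ, hℓ, hexp⟩ := hh
  ⟨fun x ↦ -ℓ x, hℓ.neg, fun x hx ↦ by rw [Complex.exp_neg, hexp x hx]⟩

theorem multiset_prod {s : Multiset (α → ℂ)} (hs : ∀ h ∈ s, HasContinuousLogOn h X) :
    HasContinuousLogOn (fun x ↦ (s.map (· x)).prod) X := by
  induction s using Multiset.induction_on with
  | empty => simpa using const one_ne_zero
  | cons h s ih =>
    simp only [Multiset.map_cons, Multiset.prod_cons]
    exact (hs h (Multiset.mem_cons_self h s)).mul
      (ih fun k hk ↦ hs k (Multiset.mem_cons_of_mem hk))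

theorem of_norm_sub_one_lt (hh : ContinuousOn h X) (hnorm : ∀ x ∈ X, ‖h x - 1‖ < 1) :
    HasContinuousLogOn h X := by
  have hslit (x : α) (hx : x ∈ X) : h x ∈ Complex.slitPlane :=
    Complex.ball_one_subset_slitPlane (mem_ball_iff_norm.mpr (hnorm x hx))
  exact ⟨fun x ↦ Complex.log (h x), hh.clog hslit,
    fun x hx ↦ Complex.exp_log (Complex.slitPlane_ne_zero (hslit x hx))⟩

theorem union (hX : IsClosed X) (hY : IsClosed Y) (hXY : Disjoint X Y)
    (hhX : HasContinuousLogOn h X) (hhY : HasContinuousLogOn h Y) :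
    HasContinuousLogOn h (X ∪ Y) := by
  classical
  obtain ⟨ℓ, hℓ, hexp⟩ := hhX
  obtain ⟨m, hm, hexp'⟩ := hhY
  have hEqX : EqOn (X.piecewise ℓ m) ℓ X := X.piecewise_eqOn ℓ m
  have hEqY : EqOn (X.piecewise ℓ m) m Y :=
    (X.piecewise_eqOn_compl ℓ m).mono hXY.subset_compl_left
  refine ⟨X.piecewise ℓ m, (hℓ.congr hEqX).union_of_isClosed (hm.congr hEqY) hX hY, ?_⟩
  rintro x (hx | hx)
  · rw [hEqX hx, hexp x hx]
  · rw [hEqY hx, hexp' x hx]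

theorem comp {β : Type*} [TopologicalSpace β] {ψ : β → α} {Z : Set β}
    (hh : HasContinuousLogOn h X) (hψ : ContinuousOn ψ Z) (hmaps : MapsTo ψ Z X) :
    HasContinuousLogOn (h ∘ ψ) Z :=
  let ⟨ℓ, hℓ, hexp⟩ := hh
  ⟨ℓ ∘ ψ, hℓ.comp hψ hmaps, fun _ hz ↦ hexp _ (hmaps hz)⟩

theorem mono (hh : HasContinuousLogOn h X) (hYX : Y ⊆ X) : HasContinuousLogOn h Y :=
  hh.comp continuousOn_id hYX

end HasContinuousLogOn

section Plane

variable {X : Set ℂ} {a b : ℂ}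

theorem hasContinuousLogOn_sub_div_sub_of_dist_lt (hX : ∀ w ∈ X, dist a b < dist w b) :
    HasContinuousLogOn (fun w ↦ (w - a) / (w - b)) X := by
  have hb (w : ℂ) (hw : w ∈ X) : w - b ≠ 0 :=
    sub_ne_zero.mpr (dist_pos.mp (dist_nonneg.trans_lt (hX w hw)))
  refine .of_norm_sub_one_lt (by fun_prop (disch := assumption)) fun w hw ↦ ?_
  rw [div_sub_one (hb w hw), sub_sub_sub_cancel_left, norm_div,
    div_lt_one (norm_pos_iff.mpr (hb w hw)), ← dist_eq_norm, ← dist_eq_norm, dist_comm b]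
  exact hX w hw

theorem hasContinuousLogOn_sub_div_sub (hX : IsClosed X) {S : Set ℂ} (hS : IsPreconnected S)
    (hSX : S ⊆ Xᶜ) (ha : a ∈ S) (hb : b ∈ S) :
    HasContinuousLogOn (fun w ↦ (w - a) / (w - b)) X := by
  refine hS.induction₂ (fun a b ↦ HasContinuousLogOn (fun w ↦ (w - a) / (w - b)) X)
    (fun a ha ↦ ?_) (fun a b c _ hb _ hab hbc ↦ ?_) (fun a b _ _ hab ↦ ?_) ha hb
  · obtain ⟨r, hr, hball⟩ := Metric.isOpen_iff.mp hX.isOpen_compl a (hSX ha)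
    have hnear : ∀ᶠ b in 𝓝 a, dist b a < r / 2 := ball_mem_nhds a (half_pos hr)
    filter_upwards [hnear.filter_mono nhdsWithin_le_nhds] with b hb
    refine hasContinuousLogOn_sub_div_sub_of_dist_lt fun w hw ↦ ?_
    have hwr : r ≤ dist w a := not_lt.mp fun h ↦ hball h hw
    linarith [dist_triangle w b a, dist_comm a b]
  · refine (hab.mul hbc).congr fun w hw ↦ ?_
    exact (div_mul_div_cancel₀ (sub_ne_zero.mpr (ne_of_mem_of_not_mem hw (hSX hb)))).symm
  · exact hab.inv.congr fun w _ ↦ (inv_div _ _).symm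

theorem hasContinuousLogOn_sub (hX : IsCompact X) (ha : a ∉ X)
    (hunbounded : ¬ IsBounded (connectedComponentIn Xᶜ a)) :
    HasContinuousLogOn (fun w ↦ w - a) X := by
  obtain ⟨R, hR⟩ := hX.isBounded.subset_closedBall 0
  obtain ⟨b, hb, hbR⟩ : ∃ b ∈ connectedComponentIn Xᶜ a, b ∉ closedBall 0 (max R 0) :=
    not_subset.mp fun h ↦ hunbounded (isBounded_closedBall.subset h)
  obtain ⟨hRb, hb0⟩ : R < ‖b‖ ∧ 0 < ‖b‖ := by simpa using hbR
  have hlog_b : HasContinuousLogOn (fun w ↦ -b * (1 - w / b)) X := by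
    refine .mul (.const (by simpa using hb0)) (.of_norm_sub_one_lt (by fun_prop) fun w hw ↦ ?_)
    rw [sub_sub_cancel_left, norm_neg, norm_div, div_lt_one hb0]
    exact (mem_closedBall_zero_iff.mp (hR hw)).trans_lt hRb
  refine ((hasContinuousLogOn_sub_div_sub hX.isClosed isPreconnected_connectedComponentIn
    (connectedComponentIn_subset _ _) (mem_connectedComponentIn ha) hb).mul hlog_b).congr
    fun w hw ↦ ?_
  have := sub_ne_zero.mpr (ne_of_mem_of_not_mem hw (connectedComponentIn_subset _ _ hb))
  have := norm_pos_iff.mp hb0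
  field_simp
  ring

theorem hasContinuousLogOn_polynomial (hX : IsCompact X) (hhole : HasNoHole X)
    {p : Polynomial ℂ} (hp : ∀ x ∈ X, p.eval x ≠ 0) (hp0 : p ≠ 0) :
    HasContinuousLogOn (fun x ↦ p.eval x) X := by
  have hroot (a : ℂ) (ha : a ∈ p.roots) : HasContinuousLogOn (fun w ↦ w - a) X := by
    have haX : a ∉ X := fun h ↦ hp a h (Polynomial.isRoot_of_mem_roots ha)
    exact hasContinuousLogOn_sub hX haX fun hb ↦ hhole ⟨_, ⟨a, haX, rfl⟩, hb⟩
  refine ((HasContinuousLogOn.const (Polynomial.leadingCoeff_ne_zero.mpr hp0)).mul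
    (.multiset_prod (s := p.roots.map fun a w ↦ w - a) ?_)).congr fun x _ ↦ ?_
  · simpa only [Multiset.forall_mem_map_iff] using hroot
  · simp only [(IsAlgClosed.splits p).eval_eq_prod_roots x, Multiset.map_map, Function.comp_def]

theorem hasContinuousLogOn_of_hasNoHole (hX : IsCompact X) (hhole : HasNoHole X) {U : Set ℂ}
    (hU : IsOpen U) (hXU : X ⊆ U) {h : ℂ → ℂ} (hh : DifferentiableOn ℂ h U)
    (h0 : ∀ x ∈ X, h x ≠ 0) : HasContinuousLogOn h X := by
  rcases X.eq_empty_or_nonempty with rfl | hne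
  · exact (HasContinuousLogOn.const one_ne_zero).congr (eqOn_empty _ _)
  have hcont : ContinuousOn h X := hh.continuousOn.mono hXU
  obtain ⟨x₀, hx₀, hmin⟩ := hX.exists_isMinOn hne hcont.norm
  obtain ⟨p, hp⟩ := exists_polynomial_near hX hhole hU hXU hh (norm_pos_iff.mpr (h0 x₀ hx₀))
  have hquot (x : ℂ) (hx : x ∈ X) : ‖p.eval x / h x - 1‖ < 1 := by
    rw [div_sub_one (h0 x hx), norm_div, div_lt_one (norm_pos_iff.mpr (h0 x hx))]
    exact (hp x hx).trans_le (hmin hx)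
  have hp0 (x : ℂ) (hx : x ∈ X) : p.eval x ≠ 0 := fun hpx ↦ by
    simpa [hpx] using hquot x hx
  have hlog_quot : HasContinuousLogOn (fun x ↦ p.eval x / h x) X :=
    .of_norm_sub_one_lt (p.continuous.continuousOn.div hcont h0) hquot
  refine ((hasContinuousLogOn_polynomial hX hhole hp0 fun h ↦ hp0 x₀ hx₀ (by simp [h])).mul
    hlog_quot.inv).congr fun x hx ↦ ?_
  have := hp0 x hx
  simp [mul_div_cancel₀ _ this]

/-- A continuous logarithm of `w - a` on a circle would differ from `i θ` by a constant. -/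
theorem not_hasContinuousLogOn_sphere (a : ℂ) {R : ℝ} (hR : 0 < R) :
    ¬ HasContinuousLogOn (fun w ↦ w - a) (sphere a R) := by
  rintro ⟨ℓ, hℓ, hexp⟩
  have hcont : Continuous fun θ ↦ ℓ (circleMap a R θ) :=
    hℓ.comp_continuous (continuous_circleMap a R) fun θ ↦ circleMap_mem_sphere a hR.le θ
  have hlift (θ : ℝ) : Complex.exp (ℓ (circleMap a R θ)) = R * Complex.exp (θ * Complex.I) :=
    (hexp _ (circleMap_mem_sphere a hR.le θ)).trans (add_sub_cancel_left _ _)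
  have heq : (fun θ ↦ ℓ (circleMap a R θ)) = fun θ : ℝ ↦ ℓ (circleMap a R 0) + θ * Complex.I := by
    refine Complex.isCoveringMap_exp.eq_of_comp_eq hcont (by fun_prop) (funext fun θ ↦ ?_) 0
      (by simp)
    ext
    simp [hlift, Complex.exp_add]
  have h2pi := congr_fun heq (2 * Real.pi)
  have hperiod : circleMap a R (2 * Real.pi) = circleMap a R 0 := by
    simpa using periodic_circleMap a R 0
  simp [hperiod] at h2pi

theorem hasContinuousLogOn_univ {q : ℂ → ℂ} (hq : Continuous q) (hq0 : ∀ w, q w ≠ 0) :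
    HasContinuousLogOn q univ := by
  have : ContractibleSpace (univ : Set ℂ) := convex_univ.contractibleSpace univ_nonempty
  obtain ⟨ℓ, hℓ, hexp⟩ := Complex.exists_continuousOn_eqOn_exp_comp
    (SimplyConnectedSpace.ofContractible (univ : Set ℂ)) isOpen_univ hq.continuousOn
    (by rintro ⟨w, -, hw⟩; exact hq0 w hw)
  exact ⟨ℓ, hℓ, hexp⟩

theorem not_hasContinuousLogOn_frontier {W : Set ℂ} (hWb : IsBounded W) (ha : a ∈ W)
    {h : ℂ → ℂ} (hh : ContinuousOn h (closure W)) (h0 : ∀ w ∈ closure W, h w ≠ 0) :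
    ¬ HasContinuousLogOn (fun w ↦ (w - a) / h w) (frontier W) := by
  classical
  rintro ⟨ℓ, hℓ, hexp⟩
  obtain ⟨m, hm⟩ := ContinuousMap.exists_restrict_eq isClosed_frontier
    ⟨(frontier W).domRestrict ℓ, hℓ.domRestrict⟩
  have hmℓ (w : ℂ) (hw : w ∈ frontier W) : m w = ℓ w := congr($hm ⟨w, hw⟩)
  let q : ℂ → ℂ := W.piecewise (fun w ↦ h w * Complex.exp (m w)) (fun w ↦ w - a)
  have hq : Continuous q := by
    refine continuous_piecewise (fun w hw ↦ ?_) (by fun_prop) (by fun_prop)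
    rw [hmℓ w hw, hexp w hw, mul_div_cancel₀ _ (h0 w (frontier_subset_closure hw))]
  have hq0 (w : ℂ) : q w ≠ 0 := by
    by_cases hw : w ∈ W
    · simpa only [q, piecewise_eq_of_mem _ _ _ hw] using
        mul_ne_zero (h0 w (subset_closure hw)) (Complex.exp_ne_zero _)
    · simpa only [q, piecewise_eq_of_notMem _ _ _ hw] using
        sub_ne_zero.mpr (ne_of_mem_of_not_mem ha hw).symm
  obtain ⟨R, hR, hWR⟩ := hWb.subset_ball_lt 0 a
  refine not_hasContinuousLogOn_sphere a hR
    (((hasContinuousLogOn_univ hq hq0).mono (subset_univ _)).congr fun w hw ↦ ?_)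
  exact (piecewise_eq_of_notMem W _ (· - a) fun h ↦ (mem_ball.mp (hWR h)).ne hw).symm

end Plane

end ContinuousLogarithm

section OmegaConvexity

open scoped Topology

theorem frontier_connectedComponentIn_subset {α : Type*} [TopologicalSpace α]
    [LocallyConnectedSpace α] {F : Set α} (hF : IsOpen F) (x : α) :
    frontier (connectedComponentIn F x) ⊆ Fᶜ := by
  intro w hw hwF
  obtain ⟨y, hyw, hyx⟩ := mem_closure_iff.mp (frontier_subset_closure hw) _
    hF.connectedComponentIn (mem_connectedComponentIn hwF)
  have heq : connectedComponentIn F w = connectedComponentIn F x :=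
    (connectedComponentIn_eq hyw).trans (connectedComponentIn_eq hyx).symm
  exact disjoint_left.mp (disjoint_frontier_iff_isOpen.mpr hF.connectedComponentIn) hw
    (heq ▸ mem_connectedComponentIn hwF)

theorem OmegaConvex.exists_hasContinuousLogOn_sub_div {Ω L : Set ℂ} (hconv : OmegaConvex Ω L)
    (hL : IsCompact L) {a : ℂ} (ha : a ∉ L) :
    ∃ h : ℂ → ℂ, Differentiable ℂ h ∧ (∀ w ∈ L ∪ Ω, h w ≠ 0) ∧
      HasContinuousLogOn (fun w ↦ (w - a) / h w) L := by
  by_cases hb : IsBounded (connectedComponentIn Lᶜ a)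
  · obtain ⟨b, hb, hbΩ⟩ := hconv _ ⟨⟨a, ha, rfl⟩, hb⟩
    have hbL : b ∉ L := connectedComponentIn_subset _ _ hb
    refine ⟨(· - b), by fun_prop, fun w hw ↦ sub_ne_zero.mpr (ne_of_mem_of_not_mem hw ?_),
      hasContinuousLogOn_sub_div_sub hL.isClosed isPreconnected_connectedComponentIn
        (connectedComponentIn_subset _ _) (mem_connectedComponentIn ha) hb⟩
    exact fun h ↦ h.elim hbL hbΩ
  · refine ⟨fun _ ↦ 1, by fun_prop, fun _ _ ↦ one_ne_zero, ?_⟩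
    simpa only [div_one] using hasContinuousLogOn_sub hL ha hb

theorem OmegaConvex.union_image {Ω L K U : Set ℂ} (hconv : OmegaConvex Ω L) (hL : IsCompact L)
    (hK : IsCompact K) (hhole : HasNoHole K) (hU : IsOpen U) (hKU : K ⊆ U) {φ ψ : ℂ → ℂ}
    (hφ : DifferentiableOn ℂ φ U) (hψ : ContinuousOn ψ (φ '' K)) (hψφ : LeftInvOn ψ φ K)
    (hφK : φ '' K ⊆ Ω) (hdisj : Disjoint L (φ '' K)) : OmegaConvex Ω (L ∪ φ '' K) := by
  rintro _ ⟨⟨a, ha, rfl⟩, hbounded⟩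
  by_contra hdisjoint
  set C := connectedComponentIn (L ∪ φ '' K)ᶜ a
  have hCΩ : C ⊆ Ω := fun w hw ↦ by_contra fun h ↦ hdisjoint ⟨w, hw, h⟩
  have hφKc : IsCompact (φ '' K) := hK.image_of_continuousOn (hφ.continuousOn.mono hKU)
  have hopen : IsOpen (L ∪ φ '' K)ᶜ := (hL.union hφKc).isClosed.isOpen_compl
  have hfrontier : frontier C ⊆ L ∪ φ '' K :=
    compl_compl (L ∪ φ '' K) ▸ frontier_connectedComponentIn_subset hopen a
  have hclosure : closure C ⊆ L ∪ Ω := by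
    rw [closure_eq_self_union_frontier]
    exact union_subset (hCΩ.trans subset_union_right)
      (hfrontier.trans (union_subset_union_right L hφK))
  obtain ⟨h, hh, h0, hlogL⟩ :=
    hconv.exists_hasContinuousLogOn_sub_div hL fun haL ↦ ha (Or.inl haL)
  have hlogK : HasContinuousLogOn (fun z ↦ (φ z - a) * (h (φ z))⁻¹) K := by
    refine .mul (hasContinuousLogOn_of_hasNoHole hK hhole hU hKU (hφ.sub_const a) fun z hz ↦ ?_)
      (.inv (hasContinuousLogOn_of_hasNoHole hK hhole hU hKU (hh.comp_differentiableOn hφ)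
        fun z hz ↦ h0 _ (Or.inr (hφK (mem_image_of_mem φ hz)))))
    exact sub_ne_zero.mpr (ne_of_mem_of_not_mem (mem_image_of_mem φ hz) fun h ↦ ha (Or.inr h))
  have hlog_image : HasContinuousLogOn (fun w ↦ (w - a) / h w) (φ '' K) := by
    refine (hlogK.comp hψ (hψφ.mapsTo (surjOn_image φ K))).congr ?_
    rintro _ ⟨z, hz, rfl⟩
    simp only [Function.comp_apply, hψφ hz, div_eq_mul_inv]
  exact not_hasContinuousLogOn_frontier hbounded
    (mem_connectedComponentIn ha) hh.continuous.continuousOn (fun w hw ↦ h0 w (hclosure hw))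
    ((hlogL.union hL.isClosed hφKc.isClosed hdisj hlog_image).mono hfrontier)

end OmegaConvexity

section InjectiveHolomorphic

open scoped Topology

variable {U : Set ℂ} {φ ψ : ℂ → ℂ} {z : ℂ}

theorem not_eventually_eq_of_injOn (hinj : InjOn φ U) (hU : U ∈ 𝓝 z) :
    ¬ ∀ᶠ w in 𝓝 z, φ w = φ z := by
  intro hconst
  have hpunctured : ∀ᶠ w in 𝓝[≠] z, w ∈ U ∧ φ w = φ z := (hconst.and hU).filter_mono
    nhdsWithin_le_nhds |>.mono fun _ ↦ And.symm
  obtain ⟨w, ⟨hwU, hw⟩, hwz⟩ := (hpunctured.and self_mem_nhdsWithin).exists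
  exact hwz (hinj hwU (mem_of_mem_nhds hU) hw)

theorem nhds_le_map_nhds_of_injOn (hφ : DifferentiableOn ℂ φ U) (hinj : InjOn φ U)
    (hU : U ∈ 𝓝 z) : 𝓝 (φ z) ≤ map φ (𝓝 z) :=
  (hφ.analyticAt hU).eventually_constant_or_nhds_le_map_nhds.resolve_left
    (not_eventually_eq_of_injOn hinj hU)

theorem isOpen_image_of_injOn (hφ : DifferentiableOn ℂ φ U) (hinj : InjOn φ U) (hU : IsOpen U) :
    IsOpen (φ '' U) := by
  rw [isOpen_iff_mem_nhds, forall_mem_image]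
  exact fun z hz ↦ nhds_le_map_nhds_of_injOn hφ hinj (hU.mem_nhds hz)
    (image_mem_map (hU.mem_nhds hz))

theorem continuousAt_leftInverse (hφ : DifferentiableOn ℂ φ U) (hψ : LeftInvOn ψ φ U)
    (hU : U ∈ 𝓝 z) : ContinuousAt ψ (φ z) := by
  have hid : Tendsto (ψ ∘ φ) (𝓝 z) (𝓝 z) :=
    tendsto_id.congr' (eventually_of_mem hU fun w hw ↦ (hψ hw).symm)
  rw [ContinuousAt, hψ (mem_of_mem_nhds hU)]
  exact (tendsto_map'_iff.mpr hid).mono_left (nhds_le_map_nhds_of_injOn hφ hψ.injOn hU)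

theorem eventually_deriv_ne_zero_of_injOn (hφ : DifferentiableOn ℂ φ U) (hinj : InjOn φ U)
    (hU : U ∈ 𝓝 z) : ∀ᶠ w in 𝓝[≠] z, deriv φ w ≠ 0 := by
  refine (hφ.analyticAt hU).deriv.eventually_eq_zero_or_eventually_ne_zero.resolve_left
    fun hzero ↦ not_eventually_eq_of_injOn hinj hU ?_
  obtain ⟨r, hr, hball⟩ := Metric.nhds_basis_ball.mem_iff.mp (hzero.and hU)
  filter_upwards [ball_mem_nhds z hr] with w hw
  exact isOpen_ball.is_const_of_deriv_eq_zero (convex_ball z r).isPreconnected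
    (hφ.mono fun w hw ↦ (hball hw).2) (fun w hw ↦ (hball hw).1) hw (mem_ball_self hr)

/-- The inverse is differentiable where `deriv φ ≠ 0`, hence off a discrete set, and it extends
analytically across that set because it is continuous. -/
theorem differentiableOn_leftInverse (hφ : DifferentiableOn ℂ φ U) (hψ : LeftInvOn ψ φ U)
    (hU : IsOpen U) : DifferentiableOn ℂ ψ (φ '' U) := by
  rintro _ ⟨z, hz, rfl⟩
  have hcont : ContinuousAt ψ (φ z) := continuousAt_leftInverse hφ hψ (hU.mem_nhds hz)
  have himage : φ '' U ∈ 𝓝 (φ z) :=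
    (isOpen_image_of_injOn hφ hψ.injOn hU).mem_nhds (mem_image_of_mem φ hz)
  have hpunctured : Tendsto ψ (𝓝[≠] (φ z)) (𝓝[≠] z) := by
    refine tendsto_nhdsWithin_iff.mpr ⟨?_, ?_⟩
    · simpa only [hψ hz] using hcont.tendsto.mono_left nhdsWithin_le_nhds
    · filter_upwards [nhdsWithin_le_nhds himage, self_mem_nhdsWithin]
      rintro _ ⟨w, hw, rfl⟩ hne
      rw [hψ hw]
      exact fun h ↦ hne (congrArg φ h)
  refine (Complex.analyticAt_of_differentiable_on_punctured_nhds_of_continuousAt ?_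
    hcont).differentiableAt.differentiableWithinAt
  filter_upwards [hpunctured.eventually
    (eventually_deriv_ne_zero_of_injOn hφ hψ.injOn (hU.mem_nhds hz)), nhdsWithin_le_nhds himage]
  rintro _ hderiv ⟨w, hw, rfl⟩
  rw [hψ hw] at hderiv
  have hinverse : ∀ᶠ y in 𝓝 (φ w), φ (ψ y) = y := by
    filter_upwards [(isOpen_image_of_injOn hφ hψ.injOn hU).mem_nhds (mem_image_of_mem φ hw)]
    rintro _ ⟨v, hv, rfl⟩
    rw [hψ hv]
  have hderivAt : HasDerivAt φ (deriv φ w) (ψ (φ w)) := by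
    rw [hψ hw]
    exact (hφ.differentiableAt (hU.mem_nhds hw)).hasDerivAt
  exact (hderivAt.of_local_left_inverse (continuousAt_leftInverse hφ hψ (hU.mem_nhds hw))
    hderiv hinverse).differentiableAt

end InjectiveHolomorphic

section Necessity

theorem injOn_of_norm_sub_add_const_lt {f : ℂ → ℂ} {S T : Set ℂ} {r : ℝ} {c : ℂ} (hr : 0 < r)
    (hST : ∀ z ∈ S, ball z r ⊆ T) (hf : DifferentiableOn ℂ f T)
    (hnear : ∀ z ∈ T, ‖f z - (z + c)‖ < r / 4) : InjOn f S := by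
  intro z hz w hw hfzw
  by_contra hne
  let p : ℂ → ℂ := fun z ↦ f z - (z + c)
  have hp : DifferentiableOn ℂ p T := hf.sub (by fun_prop)
  have hdist {x y : ℂ} (hx : x ∈ T) (hy : y ∈ T) : dist (p x) (p y) < r / 2 := by
    linarith [dist_le_norm_add_norm (p x) (p y), hnear x hx, hnear y hy]
  have hzT : z ∈ T := hST z hz (mem_ball_self hr)
  have hwT : w ∈ T := hST w hw (mem_ball_self hr)
  have heq : dist (p w) (p z) = dist w z := by
    rw [dist_comm w z, dist_eq_norm, dist_eq_norm]
    congr 1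
    linear_combination -hfzw
  have hpos : 0 < dist w z := dist_pos.mpr (Ne.symm hne)
  have hwz : dist w z < r := by linarith [hdist hwT hzT]
  have hschwarz := Complex.dist_le_div_mul_dist_of_mapsTo_ball (hp.mono (hST z hz))
    (fun x hx ↦ (hdist (hST z hz hx) hzT).le) hwz
  rw [heq, div_div_cancel_left' hr.ne'] at hschwarz
  linarith

theorem exists_injOn_isOpen_of_dense {G : Set ℂ} (hG : IsOpen G) {F : ℕ → ℂ → ℂ}
    (hF : ∀ n, DifferentiableOn ℂ (F n) G)
    (hdense : ∀ g : ℂ → ℂ, DifferentiableOn ℂ g G → ∀ K ⊆ G, IsCompact K → ∀ ε > 0,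
      ∃ n, ∀ z ∈ K, ‖F n z - g z‖ < ε) {K : Set ℂ} (hKG : K ⊆ G) (hK : IsCompact K) (M : ℝ) :
    ∃ n, (∀ z ∈ K, M < ‖F n z‖) ∧ ∃ U, IsOpen U ∧ K ⊆ U ∧ U ⊆ G ∧ InjOn (F n) U := by
  obtain ⟨δ, hδ, hδG⟩ := hK.exists_cthickening_subset_open hG hKG
  obtain ⟨R, hR⟩ := hK.isBounded.exists_norm_le
  have hr : 0 < δ / 2 := half_pos hδ
  let c : ℝ := M + R + 1
  obtain ⟨n, hn⟩ := hdense (fun z ↦ z + c) (by fun_prop) _ hδG hK.cthickening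
    (min 1 (δ / 2 / 4)) (by positivity)
  refine ⟨n, fun z hz ↦ ?_, thickening (δ / 2) K, isOpen_thickening, self_subset_thickening hr K,
    (thickening_subset_cthickening_of_le (half_le_self hδ.le) K).trans hδG, ?_⟩
  · have hnear : ‖c - (F n z - z)‖ < 1 := by
      rw [← norm_neg, show -(c - (F n z - z)) = F n z - (z + c) by ring]
      exact (hn z (self_subset_cthickening K hz)).trans_le (min_le_left _ _)
    have hc : c ≤ ‖(c : ℂ)‖ := (le_abs_self c).trans_eq (Complex.norm_real c).symm
    linarith [norm_le_norm_sub_add (c : ℂ) (F n z - z), norm_sub_le (F n z) z, hR z hz]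
  · have hball (z : ℂ) (hz : z ∈ thickening (δ / 2) K) : ball z (δ / 2) ⊆ cthickening δ K := by
      refine Subset.trans ?_ (thickening_subset_cthickening δ K)
      obtain ⟨x, hx, hzx⟩ := mem_thickening_iff.mp hz
      exact fun w hw ↦ mem_thickening_iff.mpr
        ⟨x, hx, by linarith [dist_triangle w z x, mem_ball.mp hw]⟩
    exact injOn_of_norm_sub_add_const_lt hr hball ((hF n).mono hδG)
      fun z hz ↦ (hn z hz).trans_le (min_le_right _ _)

theorem UniversalFor.exists_injOn {G Ω : Set ℂ} (hG : IsOpen G) {φ : ℕ → ℂ → ℂ}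
    (hφ : ∀ n, DifferentiableOn ℂ (φ n) G) (hmaps : ∀ n, MapsTo (φ n) G Ω) {f : ℂ → ℂ}
    (hf : DifferentiableOn ℂ f Ω) (hu : UniversalFor G φ f) {K : Set ℂ} (hKG : K ⊆ G)
    (hK : IsCompact K) {L : Set ℂ} (hLΩ : L ⊆ Ω) (hL : IsCompact L) :
    ∃ n, φ n '' K ∩ L = ∅ ∧ ∃ U, IsOpen U ∧ K ⊆ U ∧ U ⊆ G ∧ InjOn (φ n) U := by
  obtain ⟨M, hM⟩ := hL.exists_bound_of_continuousOn (hf.continuousOn.mono hLΩ)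
  obtain ⟨n, hlarge, U, hU, hKU, hUG, hinj⟩ := exists_injOn_isOpen_of_dense hG
    (F := fun n ↦ f ∘ φ n) (fun n ↦ hf.comp (hφ n) (hmaps n)) hu hKG hK M
  refine ⟨n, ?_, U, hU, hKU, hUG, InjOn.of_comp hinj⟩
  rw [← disjoint_iff_inter_eq_empty, disjoint_left, forall_mem_image]
  exact fun z hz hzL ↦ (hlarge z hz).not_ge (hM _ hzL)

end Necessity

section Exhaustion

theorem not_isBounded_connectedComponentIn_compl {X : Set ℂ} {R : ℝ} (hR : 0 ≤ R)
    (hX : X ⊆ closedBall 0 R) {a : ℂ} (ha : a ∉ closedBall 0 R) :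
    ¬ IsBounded (connectedComponentIn Xᶜ a) := by
  intro hbounded
  obtain ⟨M, hM⟩ := hbounded.exists_norm_le
  rw [mem_closedBall_zero_iff, not_le] at ha
  have ha0 : 0 < ‖a‖ := hR.trans_lt ha
  have hray : (· • a) '' Ici (1 : ℝ) ⊆ connectedComponentIn Xᶜ a := by
    refine (isPreconnected_Ici.image _ (by fun_prop)).subset_connectedComponentIn
      ⟨1, self_mem_Ici, one_smul ℝ a⟩ ?_
    rintro _ ⟨t, ht : 1 ≤ t, rfl⟩ htX
    have hle : ‖a‖ ≤ ‖t • a‖ := by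
      rw [norm_smul]
      exact le_mul_of_one_le_left ha0.le (ht.trans (le_abs_self t))
    exact (ha.trans_le hle).not_ge (mem_closedBall_zero_iff.mp (hX htX))
  have haM : ‖a‖ ≤ M := hM a (hray ⟨1, self_mem_Ici, one_smul ℝ a⟩)
  have hfar := hM _ (hray ⟨(M + 1) / ‖a‖, (one_le_div ha0).mpr (by linarith), rfl⟩)
  rw [norm_smul, norm_div, norm_norm, div_mul_cancel₀ _ ha0.ne'] at hfar
  linarith [Real.le_norm_self (M + 1)]

theorem omegaConvex_closedBall_diff_thickening {Ω : Set ℂ} {R : ℝ} (hR : 0 ≤ R) (δ : ℝ) :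
    OmegaConvex Ω (closedBall 0 R \ thickening δ Ωᶜ) := by
  rintro _ ⟨⟨a, ha, rfl⟩, hbounded⟩
  have haR : a ∈ closedBall 0 R := by
    by_contra haR
    exact not_isBounded_connectedComponentIn_compl hR sdiff_subset haR hbounded
  obtain ⟨p, hp, hap⟩ := mem_thickening_iff.mp (by_contra fun h ↦ ha ⟨haR, h⟩)
  have hball : ball p δ ⊆ (closedBall 0 R \ thickening δ Ωᶜ)ᶜ :=
    fun w hw h ↦ h.2 (mem_thickening_iff.mpr ⟨p, hp, hw⟩)
  exact ⟨p, (convex_ball p δ).isPreconnected.subset_connectedComponentIn hap hball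
    (mem_ball_self (dist_nonneg.trans_lt hap)), hp⟩

theorem exists_isCompact_omegaConvex_superset {Ω K : Set ℂ} (hΩ : IsOpen Ω) (hK : IsCompact K)
    (hKΩ : K ⊆ Ω) : ∃ L, IsCompact L ∧ K ⊆ L ∧ L ⊆ Ω ∧ OmegaConvex Ω L := by
  obtain ⟨R, hR, hKR⟩ := hK.isBounded.subset_closedBall_lt 0 0
  obtain ⟨δ, hδ, hKδ⟩ := hK.exists_thickening_subset_open hΩ hKΩ
  refine ⟨closedBall 0 R \ thickening δ Ωᶜ, (isCompact_closedBall 0 R).diff isOpen_thickening,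
    fun z hz ↦ ⟨hKR hz, fun hzΩ ↦ ?_⟩,
    fun z hz ↦ by_contra fun h ↦ hz.2 (self_subset_thickening hδ _ h),
    omegaConvex_closedBall_diff_thickening hR.le δ⟩
  obtain ⟨p, hp, hzp⟩ := mem_thickening_iff.mp hzΩ
  exact hp (hKδ (mem_thickening_iff.mpr ⟨z, hz, by rwa [dist_comm]⟩))

theorem OmegaConvex.hasNoHole {G K : Set ℂ} (hconv : OmegaConvex G K) (hG : HasNoHole G)
    (hKG : K ⊆ G) : HasNoHole K := by
  rintro ⟨C, hC⟩
  obtain ⟨p, hpC, hpG⟩ := hconv C hC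
  obtain ⟨⟨a, -, rfl⟩, hbounded⟩ := hC
  refine hG ⟨_, ⟨p, hpG, rfl⟩, hbounded.subset ?_⟩
  rw [connectedComponentIn_eq hpC]
  exact connectedComponentIn_mono p (compl_subset_compl.mpr hKG)

end Exhaustion

section Universality

open scoped Topology

theorem exists_differentiableOn_near_of_disjoint {Ω L K U : Set ℂ} (hΩ : IsOpen Ω)
    (hL : IsCompact L) (hLΩ : L ⊆ Ω) (hconv : OmegaConvex Ω L) (hK : IsCompact K)
    (hhole : HasNoHole K) (hU : IsOpen U) (hKU : K ⊆ U) {φ : ℂ → ℂ} (hφ : DifferentiableOn ℂ φ U)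
    (hinj : InjOn φ U) (hφK : φ '' K ⊆ Ω) (hdisj : Disjoint L (φ '' K)) {f g : ℂ → ℂ}
    (hf : DifferentiableOn ℂ f Ω) (hg : DifferentiableOn ℂ g U) {ε : ℝ} (hε : 0 < ε) :
    ∃ h, DifferentiableOn ℂ h Ω ∧ (∀ w ∈ L, ‖h w - f w‖ < ε) ∧ ∀ z ∈ K, ‖h (φ z) - g z‖ < ε := by
  classical
  let ψ := Function.invFunOn φ U
  have hψφ : LeftInvOn ψ φ U := hinj.leftInvOn_invFunOn
  have hψ : DifferentiableOn ℂ ψ (φ '' U) := differentiableOn_leftInverse hφ hψφ hU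
  have himage : IsCompact (φ '' K) := hK.image_of_continuousOn (hφ.continuousOn.mono hKU)
  obtain ⟨V, W, hV, hW, hLV, hKW, hVW⟩ := SeparatedNhds.of_isCompact_isCompact hL himage hdisj
  have hφU : IsOpen (φ '' U) := isOpen_image_of_injOn hφ hinj hU
  have hmapsψ : MapsTo ψ (φ '' U) U := forall_mem_image.mpr fun z hz ↦ (hψφ hz).symm ▸ hz
  have hfV : DifferentiableOn ℂ (V.piecewise f (g ∘ ψ)) (Ω ∩ V) :=
    (hf.mono inter_subset_left).congr fun w hw ↦ V.piecewise_eq_of_mem _ _ hw.2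
  have hgW : DifferentiableOn ℂ (V.piecewise f (g ∘ ψ)) (φ '' U ∩ W) :=
    ((hg.comp hψ hmapsψ).mono inter_subset_left).congr fun w hw ↦
      V.piecewise_eq_of_notMem _ _ (disjoint_right.mp hVW hw.2)
  have hsubset : L ∪ φ '' K ⊆ Ω ∩ V ∪ φ '' U ∩ W :=
    union_subset_union (subset_inter hLΩ hLV) (subset_inter (image_mono hKU) hKW)
  obtain ⟨h, hh, hnear⟩ := runge (hL.union himage)
    (hconv.union_image hL hK hhole hU hKU hφ (hψ.continuousOn.mono (image_mono hKU))
      (hψφ.mono hKU) hφK hdisj)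
    ((hΩ.inter hV).union (hφU.inter hW)) hsubset
    (hfV.union_of_isOpen hgW (hΩ.inter hV) (hφU.inter hW)) hε
  refine ⟨h, hh, fun w hw ↦ ?_, fun z hz ↦ ?_⟩
  · simpa only [V.piecewise_eq_of_mem _ _ (hLV hw)] using hnear w (Or.inl hw)
  · have hzK := mem_image_of_mem φ hz
    simpa only [V.piecewise_eq_of_notMem _ _ (disjoint_right.mp hVW (hKW hzK)),
      Function.comp_apply, hψφ (hKU hz)] using hnear (φ z) (Or.inr hzK)

/-- A sequence of holomorphic maps `φ n : G → Ω` is *run-away* if, for all compact sets `K ⊆ G` and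
`L ⊆ Ω`, some `φ n` is injective near `K` and moves `K` off `L`. -/
def IsRunAway (G Ω : Set ℂ) (φ : ℕ → ℂ → ℂ) : Prop :=
  ∀ K, K ⊆ G → IsCompact K → ∀ L, L ⊆ Ω → IsCompact L →
    ∃ n, φ n '' K ∩ L = ∅ ∧ ∃ U, IsOpen U ∧ K ⊆ U ∧ U ⊆ G ∧ InjOn (φ n) U

variable {G Ω : Set ℂ} {φ : ℕ → ℂ → ℂ}

theorem IsRunAway.exists_differentiableOn_near (hrun : IsRunAway G Ω φ) (hG : IsOpen G)
    (hGsc : HasNoHole G) (hΩ : IsOpen Ω) (hφ : ∀ n, DifferentiableOn ℂ (φ n) G)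
    (hmaps : ∀ n, MapsTo (φ n) G Ω) {L : Set ℂ} (hL : IsCompact L) (hLΩ : L ⊆ Ω) {K : Set ℂ}
    (hK : IsCompact K) (hKG : K ⊆ G) {f g : ℂ → ℂ} (hf : DifferentiableOn ℂ f Ω)
    (hg : DifferentiableOn ℂ g G) {ε : ℝ} (hε : 0 < ε) :
    ∃ n h, DifferentiableOn ℂ h Ω ∧ (∀ w ∈ L, ‖h w - f w‖ < ε) ∧
      ∀ z ∈ K, ‖h (φ n z) - g z‖ < ε := by
  obtain ⟨K', hK', hKK', hKG', hKconv⟩ := exists_isCompact_omegaConvex_superset hG hK hKG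
  obtain ⟨L', hL', hLL', hLΩ', hLconv⟩ := exists_isCompact_omegaConvex_superset hΩ hL hLΩ
  obtain ⟨n, hdisj, U, hU, hKU, hUG, hinj⟩ := hrun K' hKG' hK' L' hLΩ' hL'
  obtain ⟨h, hh, hhf, hhg⟩ := exists_differentiableOn_near_of_disjoint hΩ hL' hLΩ' hLconv hK'
    (hKconv.hasNoHole hGsc hKG') hU hKU ((hφ n).mono hUG) hinj
    ((hmaps n).mono_left hKG').image_subset (disjoint_iff_inter_eq_empty.mpr hdisj).symm hf
    (hg.mono hUG) hε
  exact ⟨n, h, hh, fun w hw ↦ hhf w (hLL' hw), fun z hz ↦ hhg z (hKK' hz)⟩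

theorem exists_denseRange_of_transitive {X Y : Type*} [TopologicalSpace X] [BaireSpace X]
    [Nonempty X] [TopologicalSpace Y] [SecondCountableTopology Y] {T : ℕ → X → Y}
    (hT : ∀ n, Continuous (T n))
    (htrans : ∀ U : Set X, IsOpen U → U.Nonempty → ∀ V : Set Y, IsOpen V → V.Nonempty →
      ∃ n, ∃ x ∈ U, T n x ∈ V) :
    ∃ x, DenseRange fun n ↦ T n x := by
  let 𝓑 := TopologicalSpace.countableBasis Y
  have h𝓑 : TopologicalSpace.IsTopologicalBasis 𝓑 := TopologicalSpace.isBasis_countableBasis Y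
  have hdense : Dense (⋂ V ∈ 𝓑, ⋃ n, T n ⁻¹' V) := by
    refine dense_biInter_of_isOpen
      (fun V hV ↦ isOpen_iUnion fun n ↦ (h𝓑.isOpen hV).preimage (hT n))
      (TopologicalSpace.countable_countableBasis Y) fun V hV ↦ ?_
    refine dense_iff_inter_open.mpr fun U hU hUne ↦ ?_
    obtain ⟨n, x, hx, hxV⟩ :=
      htrans U hU hUne V (h𝓑.isOpen hV) (TopologicalSpace.nonempty_of_mem_countableBasis hV)
    exact ⟨x, hx, mem_iUnion.mpr ⟨n, hxV⟩⟩
  obtain ⟨x, hx⟩ := hdense.nonempty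
  refine ⟨x, h𝓑.dense_iff.mpr fun V hV _ ↦ ?_⟩
  obtain ⟨n, hn⟩ := mem_iUnion.mp (mem_iInter₂.mp hx V hV)
  exact ⟨T n x, hn, mem_range_self n⟩

theorem mem_holomorphicRestrictions_self_iff {F : C(Ω, ℂ)} :
    F ∈ holomorphicRestrictions Ω Ω ↔
      DifferentiableOn ℂ (Function.extend Subtype.val F 0) Ω := by
  have hext (z : Ω) : Function.extend Subtype.val F 0 (z : ℂ) = F z :=
    Subtype.val_injective.extend_apply F 0 z
  refine ⟨fun ⟨f, hf, hFf⟩ ↦ hf.congr fun z hz ↦ ?_, fun hF ↦ ⟨_, hF, fun z ↦ (hext z).symm⟩⟩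
  rw [hext ⟨z, hz⟩, hFf]

theorem isClosed_holomorphicRestrictions (hΩ : IsOpen Ω) :
    IsClosed (holomorphicRestrictions Ω Ω : Set C(Ω, ℂ)) := by
  have : LocallyCompactSpace Ω := hΩ.locallyCompactSpace
  refine isClosed_of_closure_subset fun F hF ↦ ?_
  have := mem_closure_iff_nhdsWithin_neBot.mp hF
  rw [SetLike.mem_coe, mem_holomorphicRestrictions_self_iff]
  refine TendstoLocallyUniformlyOn.differentiableOn
    (F := fun F' : C(Ω, ℂ) ↦ Function.extend Subtype.val F' 0)
    (φ := 𝓝[holomorphicRestrictions Ω Ω] F) ?_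
    (eventually_mem_nhdsWithin.mono fun F' ↦ mem_holomorphicRestrictions_self_iff.mp) hΩ
  rw [tendstoLocallyUniformlyOn_iff_tendstoLocallyUniformly_comp_coe]
  simpa only [Subtype.val_injective.extend_apply, Function.extend_comp Subtype.val_injective,
    id] using ContinuousMap.tendsto_iff_tendstoLocallyUniformly.mp
      (tendsto_id'.mpr nhdsWithin_le_nhds)

theorem hasBasis_nhds_forall_dist_lt {X E : Type*} [TopologicalSpace X] [PseudoMetricSpace E]
    {S : Set C(X, E)} (F : S) :
    (𝓝 F).HasBasis (fun p : Set X × ℝ ↦ IsCompact p.1 ∧ 0 < p.2)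
      fun p ↦ {F' | ∀ x ∈ p.1, dist (F'.1 x) (F.1 x) < p.2} := by
  rw [nhds_subtype_eq_comap]
  exact (nhds_basis_uniformity uniformity_basis_dist.compactConvergenceUniformity).comap _

/-- The space `H(Ω)` of holomorphic functions on `Ω`, with the topology of locally uniform
convergence inherited from `C(Ω, ℂ)`. -/
abbrev HolomorphicFunction (Ω : Set ℂ) : Type := (holomorphicRestrictions Ω Ω : Set C(Ω, ℂ))

/-- A function holomorphic on `Ω`, as an element of `H(Ω)`. -/
def toHolomorphicFunction {f : ℂ → ℂ} (hf : DifferentiableOn ℂ f Ω) : HolomorphicFunction Ω :=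
  ⟨⟨Ω.domRestrict f, hf.continuousOn.domRestrict⟩, f, hf, fun _ ↦ rfl⟩

/-- The composition operator `F ↦ F ∘ φ` from `H(Ω)` to `H(G)`. -/
noncomputable def compHolomorphic {φ : ℂ → ℂ} (hφ : DifferentiableOn ℂ φ G) (hmaps : MapsTo φ G Ω)
    (F : HolomorphicFunction Ω) : HolomorphicFunction G :=
  ⟨F.1.comp ⟨hmaps.restrict, hφ.continuousOn.mapsToRestrict hmaps⟩,
    let ⟨f, hf, hFf⟩ := F.2
    ⟨f ∘ φ, hf.comp hφ hmaps, fun _ ↦ hFf _⟩⟩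

theorem continuous_compHolomorphic {φ : ℂ → ℂ} (hφ : DifferentiableOn ℂ φ G)
    (hmaps : MapsTo φ G Ω) : Continuous (compHolomorphic hφ hmaps) :=
  ((ContinuousMap.continuous_precomp _).comp continuous_subtype_val).subtype_mk _

theorem UniversalFor.of_denseRange (hφ : ∀ n, DifferentiableOn ℂ (φ n) G)
    (hmaps : ∀ n, MapsTo (φ n) G Ω) {F : HolomorphicFunction Ω}
    (hdense : DenseRange fun n ↦ compHolomorphic (hφ n) (hmaps n) F) {f : ℂ → ℂ}
    (hFf : ∀ w : Ω, F.1 w = f w) : UniversalFor G φ f := by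
  intro g hg K hKG hK ε hε
  have hK' : IsCompact (Subtype.val ⁻¹' K : Set G) :=
    Topology.IsInducing.subtypeVal.isCompact_preimage' hK (by rwa [Subtype.range_coe])
  obtain ⟨_, hn, n, rfl⟩ := mem_closure_iff_nhds.mp (hdense (toHolomorphicFunction hg)) _
    ((hasBasis_nhds_forall_dist_lt _).mem_of_mem (i := (_, ε)) ⟨hK', hε⟩)
  refine ⟨n, fun z hz ↦ ?_⟩
  have hz' := hn ⟨z, hKG hz⟩ hz
  rw [dist_eq_norm] at hz'
  exact (hFf ⟨φ n z, hmaps n (hKG hz)⟩) ▸ hz'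

theorem IsRunAway.exists_compHolomorphic_mem (hrun : IsRunAway G Ω φ) (hG : IsOpen G)
    (hGsc : HasNoHole G) (hΩ : IsOpen Ω) (hφ : ∀ n, DifferentiableOn ℂ (φ n) G)
    (hmaps : ∀ n, MapsTo (φ n) G Ω) {U : Set (HolomorphicFunction Ω)} (hU : IsOpen U)
    (hUne : U.Nonempty) {V : Set (HolomorphicFunction G)} (hV : IsOpen V) (hVne : V.Nonempty) :
    ∃ n, ∃ F ∈ U, compHolomorphic (hφ n) (hmaps n) F ∈ V := by
  obtain ⟨F, hF⟩ := hUne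
  obtain ⟨E, hE⟩ := hVne
  obtain ⟨⟨L, ε⟩, ⟨hL, hε⟩, hLU⟩ :=
    (hasBasis_nhds_forall_dist_lt F).mem_iff.mp (hU.mem_nhds hF)
  obtain ⟨⟨K, δ⟩, ⟨hK, hδ⟩, hKV⟩ :=
    (hasBasis_nhds_forall_dist_lt E).mem_iff.mp (hV.mem_nhds hE)
  obtain ⟨f, hf, hFf⟩ := F.2
  obtain ⟨g, hg, hEg⟩ := E.2
  obtain ⟨n, h, hh, hhf, hhg⟩ := hrun.exists_differentiableOn_near hG hGsc hΩ hφ hmaps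
    (hL.image continuous_subtype_val) (Subtype.coe_image_subset Ω L)
    (hK.image continuous_subtype_val) (Subtype.coe_image_subset G K) hf hg (lt_min hε hδ)
  refine ⟨n, toHolomorphicFunction hh, hLU fun w hw ↦ ?_, hKV fun z hz ↦ ?_⟩
  · rw [hFf, dist_eq_norm]
    exact (hhf w (mem_image_of_mem _ hw)).trans_le (min_le_left _ _)
  · rw [hEg, dist_eq_norm]
    exact (hhg z (mem_image_of_mem _ hz)).trans_le (min_le_right _ _)

theorem IsRunAway.exists_universalFor (hrun : IsRunAway G Ω φ) (hG : IsOpen G)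
    (hGsc : HasNoHole G) (hΩ : IsOpen Ω) (hφ : ∀ n, DifferentiableOn ℂ (φ n) G)
    (hmaps : ∀ n, MapsTo (φ n) G Ω) :
    ∃ f, DifferentiableOn ℂ f Ω ∧ UniversalFor G φ f := by
  have : LocallyCompactSpace G := hG.locallyCompactSpace
  have : LocallyCompactSpace Ω := hΩ.locallyCompactSpace
  have := (isClosed_holomorphicRestrictions hΩ).completeSpace_coe
  have : Nonempty (HolomorphicFunction Ω) := ⟨⟨0, zero_mem _⟩⟩
  obtain ⟨F, hdense⟩ := exists_denseRange_of_transitive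
    (fun n ↦ continuous_compHolomorphic (hφ n) (hmaps n))
    (fun _ hU hUne _ hV hVne ↦
      hrun.exists_compHolomorphic_mem hG hGsc hΩ hφ hmaps hU hUne hV hVne)
  obtain ⟨f, hf, hFf⟩ := F.2
  exact ⟨f, hf, .of_denseRange hφ hmaps hdense hFf⟩

theorem universal_iff_of_simplyConnected_general (hG : IsOpen G) (hGsc : HasNoHole G)
    (hΩ : IsOpen Ω) (hφ : ∀ n, DifferentiableOn ℂ (φ n) G) (hmaps : ∀ n, MapsTo (φ n) G Ω) :
    (∃ f, DifferentiableOn ℂ f Ω ∧ UniversalFor G φ f) ↔ IsRunAway G Ω φ :=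
  ⟨fun ⟨_, hf, hu⟩ _ hKG hK _ hLΩ hL ↦ hu.exists_injOn hG hφ hmaps hf hKG hK hLΩ hL,
    fun hrun ↦ hrun.exists_universalFor hG hGsc hΩ hφ hmaps⟩

end Universality

/-- Theorem `thm-simply-connected-gl-GM`: characterisation when `G` is
simply connected, for arbitrary (not necessarily eventually injective) sequences. -/
theorem universal_iff_of_simplyConnected
    (G Ω : Set ℂ) (hG : IsOpen G) (hGconn : IsConnected G) (hGsc : HasNoHole G)
    (hΩ : IsOpen Ω) (hΩconn : IsConnected Ω)
    (φ : ℕ → ℂ → ℂ) (hφd : ∀ n, DifferentiableOn ℂ (φ n) G)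
    (hφm : ∀ n, Set.MapsTo (φ n) G Ω) :
    (∃ f : ℂ → ℂ, DifferentiableOn ℂ f Ω ∧ UniversalFor G φ f) ↔
      ∀ K : Set ℂ, K ⊆ G → IsCompact K →
        ∀ L : Set ℂ, L ⊆ Ω → IsCompact L →
          ∃ n : ℕ, (φ n '' K) ∩ L = ∅ ∧
            ∃ U : Set ℂ, IsOpen U ∧ K ⊆ U ∧ U ⊆ G ∧ Set.InjOn (φ n) U :=
  universal_iff_of_simplyConnected_general hG hGsc hΩ hφd hφm
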